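/- Suppose ρ ∈ (0,1) is irrational and its continued fraction partial quotients satisfy aₙ ≤ n² for all sufficiently large n. Then there exists a constant c > 0 such that |pₙ − qₙ·ρ| ≥ c/(qₙ·(ln qₙ)²) for all n ≥ 2, where pₙ/qₙ are the convergents of ρ. -/

import Mathlib

open MeasureTheory Filter

/-- The Gauss map `x ↦ {1/x}`. -/
noncomputable def gaussMap (x : ℝ) : ℝ := Int.fract (1 / x)

/-- The `n`-th continued fraction partial quotient of `ρ` (for `n ≥ 1`):
`aₙ(ρ) = ⌊1 / G^[n-1] ρ⌋` where `G` is the Gauss map. -/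
noncomputable def cfa (ρ : ℝ) (n : ℕ) : ℤ := ⌊1 / (gaussMap^[n - 1] ρ)⌋

/-- The Diophantine condition (2): `aₙ ≤ n²` for all sufficiently large `n`. -/
def DiophCond (ρ : ℝ) : Prop := ∃ N : ℕ, ∀ n : ℕ, N ≤ n → cfa ρ n ≤ (n : ℤ) ^ 2

/-- Denominators `qₙ` of the continued fraction convergents of `ρ`:
`q₀ = 1`, `q₁ = a₁`, `q_{n+2} = a_{n+2} q_{n+1} + qₙ`. -/
noncomputable def cfq (ρ : ℝ) : ℕ → ℤ
  | 0 => 1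
  | 1 => cfa ρ 1
  | n + 2 => cfa ρ (n + 2) * cfq ρ (n + 1) + cfq ρ n

/-- Numerators `pₙ` of the continued fraction convergents of `ρ`:
`p₀ = 0`, `p₁ = 1`, `p_{n+2} = a_{n+2} p_{n+1} + pₙ`. -/
noncomputable def cfp (ρ : ℝ) : ℕ → ℤ
  | 0 => 0
  | 1 => 1
  | n + 2 => cfa ρ (n + 2) * cfp ρ (n + 1) + cfp ρ n

/-- Distance from a real number to the nearest integer. -/
noncomputable def distNearestInt (t : ℝ) : ℝ := |t - round t|

/-!
Let `xₙ = Gⁿ ρ`, so that `1 / xₙ = aₙ₊₁ + xₙ₊₁`, and let `dₙ = pₙ - qₙ ρ`. The recurrences give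
`dₙ₊₁ = -xₙ₊₁ dₙ` and then `dₙ (qₙ₊₁ + xₙ₊₁ qₙ) = (-1)ⁿ⁺¹`, whence `|dₙ| ≥ 1 / (qₙ + qₙ₊₁)`. As
`qₙ₊₁ ≤ (aₙ₊₁ + 1) qₙ`, the remainder is small compared with `1 / qₙ` only when `aₙ₊₁` is large.
The denominators grow at least exponentially, because `qₙ₊₂ ≥ 2 qₙ`, so a bound on `aₙ₊₁` by a
power of `n` is a bound by the same power of `log qₙ`.
-/

section GaussMap

variable {x : ℝ}

lemma irrational_gaussMap (hx : Irrational x) : Irrational (gaussMap x) := by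
  rw [gaussMap, one_div]
  exact hx.inv.sub_intCast _

lemma irrational_iterate_gaussMap (hx : Irrational x) (n : ℕ) : Irrational (gaussMap^[n] x) :=
  Set.MapsTo.iterate (s := {y | Irrational y}) (fun _ => irrational_gaussMap) n hx

lemma gaussMap_mem_Ioo (hx : Irrational x) : gaussMap x ∈ Set.Ioo (0 : ℝ) 1 :=
  ⟨(Int.fract_nonneg _).lt_of_ne (irrational_gaussMap hx).ne_zero.symm, Int.fract_lt_one _⟩

lemma iterate_gaussMap_succ_mem_Ioo (hx : Irrational x) (n : ℕ) :
    gaussMap^[n + 1] x ∈ Set.Ioo (0 : ℝ) 1 := by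
  rw [Function.iterate_succ_apply']
  exact gaussMap_mem_Ioo (irrational_iterate_gaussMap hx n)

lemma iterate_gaussMap_mem_Ioo (hx : Irrational x) (hx01 : x ∈ Set.Ioo (0 : ℝ) 1) :
    ∀ n : ℕ, gaussMap^[n] x ∈ Set.Ioo (0 : ℝ) 1
  | 0 => hx01
  | n + 1 => iterate_gaussMap_succ_mem_Ioo hx n

end GaussMap

/-- The remainder `pₙ - qₙ ρ` of the `n`-th convergent of `ρ`, in terms of which
`|ρ - pₙ / qₙ| = |cfRemainder ρ n| / qₙ` when `qₙ > 0`. -/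
noncomputable def cfRemainder (ρ : ℝ) (n : ℕ) : ℝ := cfp ρ n - cfq ρ n * ρ

section Recurrence

variable {ρ : ℝ}

lemma cfp_add_two (ρ : ℝ) (n : ℕ) :
    cfp ρ (n + 2) = cfa ρ (n + 2) * cfp ρ (n + 1) + cfp ρ n := rfl

lemma cfq_add_two (ρ : ℝ) (n : ℕ) :
    cfq ρ (n + 2) = cfa ρ (n + 2) * cfq ρ (n + 1) + cfq ρ n := rfl

lemma cfRemainder_add_two (ρ : ℝ) (n : ℕ) :
    cfRemainder ρ (n + 2) = cfa ρ (n + 2) * cfRemainder ρ (n + 1) + cfRemainder ρ n := by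
  simp only [cfRemainder, cfp_add_two, cfq_add_two]
  push_cast
  ring

lemma cfa_succ_add_iterate_gaussMap (ρ : ℝ) (n : ℕ) :
    (cfa ρ (n + 1) : ℝ) + gaussMap^[n + 1] ρ = 1 / gaussMap^[n] ρ := by
  rw [Function.iterate_succ_apply']
  exact Int.floor_add_fract _

lemma iterate_gaussMap_mul_cfa_succ_add (hirr : Irrational ρ) (n : ℕ) :
    gaussMap^[n] ρ * (cfa ρ (n + 1) + gaussMap^[n + 1] ρ) = 1 := by
  rw [cfa_succ_add_iterate_gaussMap]
  exact mul_one_div_cancel (irrational_iterate_gaussMap hirr n).ne_zero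

lemma cfRemainder_succ (hirr : Irrational ρ) (n : ℕ) :
    cfRemainder ρ (n + 1) = -gaussMap^[n + 1] ρ * cfRemainder ρ n := by
  induction n with
  | zero =>
    have hx : ρ * (cfa ρ 1 + gaussMap^[1] ρ) = 1 := iterate_gaussMap_mul_cfa_succ_add hirr 0
    simp only [cfRemainder, cfp, cfq, zero_add]
    push_cast
    linear_combination -hx
  | succ n ih =>
    have hx := iterate_gaussMap_mul_cfa_succ_add hirr (n + 1)
    rw [cfRemainder_add_two]
    linear_combination (cfa ρ (n + 2) + gaussMap^[n + 2] ρ) * ih - cfRemainder ρ n * hx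

lemma cfRemainder_mul_eq_neg_one_pow (hirr : Irrational ρ) (n : ℕ) :
    cfRemainder ρ n * (cfq ρ (n + 1) + gaussMap^[n + 1] ρ * cfq ρ n) = (-1) ^ (n + 1) := by
  induction n with
  | zero =>
    have hx : ρ * (cfa ρ 1 + gaussMap^[1] ρ) = 1 := iterate_gaussMap_mul_cfa_succ_add hirr 0
    simp only [cfRemainder, cfp, cfq, zero_add]
    push_cast
    linear_combination -hx
  | succ n ih =>
    have hx := iterate_gaussMap_mul_cfa_succ_add hirr (n + 1)
    rw [cfRemainder_succ hirr, cfq_add_two]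
    push_cast
    linear_combination -ih - cfRemainder ρ n * cfq ρ (n + 1) * hx

end Recurrence

section UnitInterval

variable {ρ : ℝ} (hρ : ρ ∈ Set.Ioo (0 : ℝ) 1) (hirr : Irrational ρ)
include hρ hirr

lemma one_le_cfa (n : ℕ) : 1 ≤ cfa ρ n := by
  obtain ⟨hpos, hlt⟩ := iterate_gaussMap_mem_Ioo hirr hρ (n - 1)
  rw [cfa, Int.le_floor, Int.cast_one]
  exact (one_le_div hpos).2 hlt.le

lemma one_le_cfq : ∀ n : ℕ, 1 ≤ cfq ρ n
  | 0 => le_rfl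
  | 1 => one_le_cfa hρ hirr 1
  | n + 2 => by
    have ha := one_le_cfa hρ hirr (n + 2)
    have hq := one_le_cfq n
    have hq' := one_le_cfq (n + 1)
    rw [cfq_add_two]
    nlinarith

lemma monotone_cfq : Monotone (cfq ρ) := by
  refine monotone_nat_of_le_succ fun n => ?_
  cases n with
  | zero => exact one_le_cfa hρ hirr 1
  | succ n =>
    have ha := one_le_cfa hρ hirr (n + 2)
    have hq := one_le_cfq hρ hirr n
    have hq' := one_le_cfq hρ hirr (n + 1)
    rw [cfq_add_two]
    nlinarith

lemma cfq_succ_le (n : ℕ) : cfq ρ (n + 1) ≤ (cfa ρ (n + 1) + 1) * cfq ρ n := by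
  cases n with
  | zero => simp [cfq]
  | succ n =>
    have hmono := monotone_cfq hρ hirr n.le_succ
    rw [cfq_add_two]
    linarith

lemma two_mul_cfq_le_cfq_add_two (n : ℕ) : 2 * cfq ρ n ≤ cfq ρ (n + 2) := by
  have ha := one_le_cfa hρ hirr (n + 2)
  have hq := one_le_cfq hρ hirr n
  have hmono := monotone_cfq hρ hirr n.le_succ
  rw [cfq_add_two]
  nlinarith

lemma two_pow_half_le_cfq : ∀ n : ℕ, 2 ^ (n / 2) ≤ cfq ρ n
  | 0 => le_rfl
  | 1 => one_le_cfq hρ hirr 1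
  | n + 2 => by
    calc (2 : ℤ) ^ ((n + 2) / 2) = 2 * 2 ^ (n / 2) := by
          rw [Nat.add_div_right n two_pos, pow_succ']
      _ ≤ 2 * cfq ρ n := by gcongr; exact two_pow_half_le_cfq n
      _ ≤ cfq ρ (n + 2) := two_mul_cfq_le_cfq_add_two hρ hirr n

lemma succ_le_mul_log_cfq {n : ℕ} (hn : 2 ≤ n) :
    (n + 1 : ℝ) ≤ 4 / Real.log 2 * Real.log (cfq ρ n) := by
  have hlog : ((n / 2 : ℕ) : ℝ) * Real.log 2 ≤ Real.log (cfq ρ n) := by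
    rw [← Real.log_pow]
    exact Real.log_le_log (by positivity) (mod_cast two_pow_half_le_cfq hρ hirr n)
  have hhalf : (n + 1 : ℝ) ≤ 4 * (n / 2 : ℕ) := by
    have : n + 1 ≤ 4 * (n / 2) := by omega
    exact_mod_cast this
  rw [div_mul_eq_mul_div, le_div_iff₀ (Real.log_pos one_lt_two)]
  calc (n + 1) * Real.log 2 ≤ 4 * (n / 2 : ℕ) * Real.log 2 := by gcongr
    _ ≤ 4 * Real.log (cfq ρ n) := by linarith

lemma one_div_cfq_add_le_abs_cfRemainder (n : ℕ) :
    1 / (cfq ρ n + cfq ρ (n + 1) : ℝ) ≤ |cfRemainder ρ n| := by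
  have hq : (0 : ℝ) < cfq ρ n := mod_cast one_le_cfq hρ hirr n
  have hq' : (0 : ℝ) < cfq ρ (n + 1) := mod_cast one_le_cfq hρ hirr (n + 1)
  obtain ⟨hpos, hlt⟩ := iterate_gaussMap_succ_mem_Ioo hirr n
  have hexact : |cfRemainder ρ n| * (cfq ρ (n + 1) + gaussMap^[n + 1] ρ * cfq ρ n) = 1 := by
    rw [← abs_of_pos (by positivity : 0 < cfq ρ (n + 1) + gaussMap^[n + 1] ρ * cfq ρ n),
      ← abs_mul, cfRemainder_mul_eq_neg_one_pow hirr, abs_neg_one_pow]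
  rw [div_le_iff₀ (by positivity), ← hexact, add_comm (cfq ρ n : ℝ)]
  gcongr
  exact mul_le_of_le_one_left hq.le hlt.le

lemma one_div_cfa_succ_mul_cfq_le_abs_cfRemainder (n : ℕ) :
    1 / (3 * cfa ρ (n + 1) * cfq ρ n : ℝ) ≤ |cfRemainder ρ n| := by
  have ha := one_le_cfa hρ hirr (n + 1)
  have hq := one_le_cfq hρ hirr n
  have hq' := one_le_cfq hρ hirr (n + 1)
  have hsum : cfq ρ n + cfq ρ (n + 1) ≤ 3 * cfa ρ (n + 1) * cfq ρ n := by
    nlinarith [cfq_succ_le hρ hirr n]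
  refine le_trans ?_ (one_div_cfq_add_le_abs_cfRemainder hρ hirr n)
  exact one_div_le_one_div_of_le (mod_cast by omega) (mod_cast hsum)

lemma DiophCond.isBigO_cfa (h : DiophCond ρ) :
    (fun n => (cfa ρ n : ℝ)) =O[atTop] fun n : ℕ => (n : ℝ) ^ (2 : ℝ) := by
  refine .of_bound' ((eventually_atTop.2 h).mono fun n hn => ?_)
  have ha : (0 : ℝ) ≤ cfa ρ n := mod_cast zero_le_one.trans (one_le_cfa hρ hirr n)
  rw [Real.norm_of_nonneg ha, Real.norm_of_nonneg (by positivity), Real.rpow_two]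
  exact_mod_cast hn

end UnitInterval

theorem stmt_3_general {ρ : ℝ} (hρ : ρ ∈ Set.Ioo (0 : ℝ) 1) (hirr : Irrational ρ) {s : ℝ}
    (hs : 0 ≤ s)
    (ha : (fun n => (cfa ρ n : ℝ)) =O[atTop] fun n : ℕ => (n : ℝ) ^ s) :
    ∃ c : ℝ, 0 < c ∧ ∀ n : ℕ, 2 ≤ n →
      c / ((cfq ρ n : ℝ) * (Real.log (cfq ρ n)) ^ s) ≤
        |(cfp ρ n : ℝ) - (cfq ρ n : ℝ) * ρ| := by
  obtain ⟨C, hC, hbound⟩ := Asymptotics.bound_of_isBigO_nat_atTop ha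
  refine ⟨1 / (3 * C * (4 / Real.log 2) ^ s), by positivity, fun n hn => ?_⟩
  have hq : (1 : ℝ) ≤ cfq ρ n := mod_cast one_le_cfq hρ hirr n
  have hlogq : 0 ≤ Real.log (cfq ρ n) := Real.log_nonneg hq
  have ha_pos : (0 : ℝ) < cfa ρ (n + 1) := mod_cast one_le_cfa hρ hirr (n + 1)
  have ha_le : (cfa ρ (n + 1) : ℝ) ≤ C * (n + 1) ^ s := by
    have hpos : 0 < ((n + 1 : ℕ) : ℝ) ^ s := by positivity
    rw [← Nat.cast_add_one, ← Real.norm_of_nonneg ha_pos.le, ← Real.norm_of_nonneg hpos.le]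
    exact hbound hpos.ne'
  have hpow : ((n : ℝ) + 1) ^ s ≤ (4 / Real.log 2) ^ s * Real.log (cfq ρ n) ^ s := by
    rw [← Real.mul_rpow (by positivity) hlogq]
    exact Real.rpow_le_rpow (by positivity) (succ_le_mul_log_cfq hρ hirr hn) hs
  calc 1 / (3 * C * (4 / Real.log 2) ^ s) / (cfq ρ n * Real.log (cfq ρ n) ^ s)
      = 1 / (3 * (C * ((4 / Real.log 2) ^ s * Real.log (cfq ρ n) ^ s)) * cfq ρ n) := by
        rw [div_div]
        ring
    _ ≤ 1 / (3 * cfa ρ (n + 1) * cfq ρ n) := by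
        gcongr
        exact ha_le.trans (by gcongr)
    _ ≤ |cfRemainder ρ n| := one_div_cfa_succ_mul_cfq_le_abs_cfRemainder hρ hirr n

/-- under the Diophantine condition (2), there is a constant `c > 0` with
`|pₙ − qₙ·ρ| ≥ c/(qₙ·(ln qₙ)²)` for all `n ≥ 2`. -/
theorem stmt_3 (ρ : ℝ) (hρ : ρ ∈ Set.Ioo (0 : ℝ) 1) (hirr : Irrational ρ)
    (hdioph : DiophCond ρ) :
    ∃ c : ℝ, 0 < c ∧ ∀ n : ℕ, 2 ≤ n →
      c / ((cfq ρ n : ℝ) * (Real.log (cfq ρ n)) ^ 2) ≤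
        |(cfp ρ n : ℝ) - (cfq ρ n : ℝ) * ρ| := by
  simpa only [Real.rpow_two] using
    stmt_3_general hρ hirr zero_le_two (hdioph.isBigO_cfa hρ hirr)
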